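/- arXiv:1906.00264 — 2 statements merged into one kernel-verified Lean document; each statement's English description precedes it below -/
import Mathlib

section
/- Let V be a countable vertex set, k ≥ 2, G a k-distinguishing class over V, and p₁, p₂ probability distributions on V. Suppose that for some vertex v ∈ V one has IPM_{G_v}(p₁,p₂) ≥ ε, where G_v = {g_v : g ∈ G} and g_v(u₁,…,u_{k−1}) = g(v,u₁,…,u_{k−1}). For q ∈ [0,1] and a distribution p on V define p^q = q·δ_v + (1−q)·p, where δ_v is the point mass at v. Then there exists q ∈ {0, 1/k, 2/k, …, 1} such that IPM_G(p₁^q, p₂^q) ≥ ε / 2^{3k²}. -/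
open scoped BigOperators

namespace GraphDisc

/-- A `k`-distinguisher is symmetric: invariant under all permutations of arguments. -/
def IsSymmetric {V : Type*} {k : ℕ} (g : (Fin k → V) → Bool) : Prop :=
  ∀ (σ : Equiv.Perm (Fin k)) (w : Fin k → V), g (w ∘ σ) = g w

/-- A `k`-distinguishing class: a family of symmetric Boolean `k`-ary functions. -/
def IsDistinguishingClass {V : Type*} {k : ℕ} (G : Set ((Fin k → V) → Bool)) : Prop :=
  ∀ g ∈ G, IsSymmetric g

/-- `p` is a probability distribution on `V` (as a mass function). -/
def IsDist {V : Type*} (p : V → ℝ) : Prop := (∀ v, 0 ≤ p v) ∧ HasSum p 1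

/-- `L_P(g)`: expected value of `g` on a `k`-tuple of i.i.d. samples from `p`. -/
noncomputable def LP {V : Type*} {k : ℕ} (p : V → ℝ) (g : (Fin k → V) → Bool) : ℝ :=
  ∑' w : Fin k → V, (∏ i, p (w i)) * (if g w then 1 else 0)

/-- `L_S(g)`: empirical frequency of `g` on all `k`-tuples from the sample `S`. -/
noncomputable def LS {V : Type*} {k m : ℕ} (S : Fin m → V) (g : (Fin k → V) → Bool) : ℝ :=
  (∑ t : Fin k → Fin m, if g (S ∘ t) then (1 : ℝ) else 0) / (m : ℝ) ^ k

/-- Probability of an event `E` under an i.i.d. sample of size `m` from `p`. -/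
noncomputable def Prob {V : Type*} (p : V → ℝ) {m : ℕ} (E : Set (Fin m → V)) : ℝ :=
  ∑' S : Fin m → V, E.indicator (fun S => ∏ i, p (S i)) S

/-- Probability of an event `E` under two independent i.i.d. samples of size `m`. -/
noncomputable def Prob2 {V : Type*} (p₁ p₂ : V → ℝ) {m : ℕ}
    (E : Set ((Fin m → V) × (Fin m → V))) : ℝ :=
  ∑' S : (Fin m → V) × (Fin m → V),
    E.indicator (fun S => (∏ i, p₁ (S.1 i)) * ∏ i, p₂ (S.2 i)) S

/-- IPM distance induced by a class of `k`-ary distinguishers. -/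
noncomputable def IPM {V : Type*} {k : ℕ} (G : Set ((Fin k → V) → Bool))
    (p₁ p₂ : V → ℝ) : ℝ :=
  ⨆ g ∈ G, |LP p₁ g - LP p₂ g|

/-- `L_P(d)` for a unary Boolean function `d`. -/
noncomputable def LP1 {V : Type*} (p : V → ℝ) (d : V → Bool) : ℝ :=
  ∑' v : V, p v * (if d v then 1 else 0)

/-- IPM distance for a family of unary Boolean functions. -/
noncomputable def IPM1 {V : Type*} (D : Set (V → Bool)) (p₁ p₂ : V → ℝ) : ℝ :=
  ⨆ d ∈ D, |LP1 p₁ d - LP1 p₂ d|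

/-- `L_P(g)` for a binary (curried) Boolean function `g`. -/
noncomputable def LP2 {V : Type*} (p : V → ℝ) (g : V → V → Bool) : ℝ :=
  ∑' w : V × V, (p w.1 * p w.2) * (if g w.1 w.2 then 1 else 0)

/-- `D` shatters the finite set `T`: every Boolean pattern on `T` is realized in `D`. -/
def Shatters {X : Type*} (D : Set (X → Bool)) (T : Finset X) : Prop :=
  ∀ f : X → Bool, ∃ d ∈ D, ∀ x ∈ T, d x = f x

/-- The VC dimension of a family of Boolean functions. -/
noncomputable def vcDim {X : Type*} (D : Set (X → Bool)) : ℕ∞ :=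
  ⨆ T ∈ {T : Finset X | Shatters D T}, (T.card : ℕ∞)

/-- Fixing the first argument of a `(k+1)`-ary function to `v`. -/
def proj {V : Type*} {k : ℕ} (v : V) (g : (Fin (k + 1) → V) → Bool) :
    (Fin k → V) → Bool := fun u => g (Fin.cons v u)

/-- The graph VC dimension, defined inductively: for `k = 1` it is the usual VC
dimension; for `k > 1` it is the supremum over `v` of the graph VC dimension of the
projected class `G_v`. -/
noncomputable def gvcDim {V : Type*} : (k : ℕ) → Set ((Fin k → V) → Bool) → ℕ∞
  | 0, G => vcDim G
  | 1, G => vcDim G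
  | (k + 2), G => ⨆ v : V, gvcDim (k + 1) (proj v '' G)

open Classical in
/-- Mixture `q·δ_v + (1−q)·p`. -/
noncomputable def mix {V : Type*} (q : ℝ) (v : V) (p : V → ℝ) : V → ℝ :=
  fun u => q * (if u = v then 1 else 0) + (1 - q) * p u

/-- The class of majority-vote threshold functions over `m`-tuples from `D`. -/
noncomputable def thresholdClass {V : Type*} (D : Set (V → Bool)) (m : ℕ) :
    Set (V → Bool) :=
  {h | ∃ d : Fin m → (V → Bool), (∀ i, d i ∈ D) ∧
        h = fun v => decide ((0 : ℝ) ≤ ∑ i, (2 * (if d i v then (1 : ℝ) else 0) - 1))}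

/-!
Fix `g ∈ G` and let `a S` be the gap between the expected values of `g` under `p₁` and `p₂` when the
arguments indexed by `S` are fixed to `v` and the others are sampled. Expanding the product
distribution, the gap between the mixtures with parameter `q` is
`∑ S, a S * q ^ |S| * (1 - q) ^ (k - |S|)`, a polynomial in `q` of degree at most `k`. By symmetry
of `g` all `a {i}` equal the gap `D` of `g_v`, so its linear coefficient is `k * (D - a ∅)`, and its
value at `0` is `a ∅`.

Let `M` bound this polynomial at the nodes `j / k` and put `P x` for its value at `x / k`. The slope
`(P x - P 0) / x` is a polynomial of degree less than `k` bounded by `2 * M` at `1, …, k`, hence by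
`(2 ^ k - 1) * (2 * M)` at `0`. There its value is `D - a ∅`, so `|D| ≤ 2 ^ (k + 1) * M`.
-/

section Polynomial

open Polynomial Finset

/-- The `k`-th forward difference of `Q` at `0` vanishes, so the values at `1, …, k` extrapolate to
`0` with coefficients `± k.choose (j + 1)`. -/
lemma abs_eval_zero_le_of_natDegree_lt {k : ℕ} {Q : ℝ[X]} (hQ : Q.natDegree < k) {M : ℝ}
    (hM : ∀ j < k, |Q.eval (j + 1 : ℝ)| ≤ M) : |Q.eval 0| ≤ (2 ^ k - 1) * M := by
  have hsum : ∑ j ∈ range k, (k.choose (j + 1) : ℝ) = 2 ^ k - 1 := by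
    have h := k.sum_range_choose
    rw [sum_range_succ', Nat.choose_zero_right] at h
    exact eq_sub_of_add_eq (mod_cast h)
  have hdiff := congrFun (fwdDiff_iter_eq_zero_of_degree_lt hQ) 0
  rw [fwdDiff_iter_eq_sum_shift, sum_range_succ'] at hdiff
  simp only [nsmul_eq_mul, mul_one, zero_add, zsmul_eq_mul, Nat.cast_zero, Nat.cast_succ,
    Nat.choose_zero_right, Int.cast_mul, Int.cast_pow, Int.cast_neg, Int.cast_one, Int.cast_natCast,
    Pi.zero_apply] at hdiff
  calc |Q.eval 0|
      = |∑ j ∈ range k, (-1) ^ (k - (j + 1)) * (k.choose (j + 1) : ℝ) * Q.eval (j + 1 : ℝ)| := by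
        rw [eq_neg_of_add_eq_zero_left hdiff, abs_neg, abs_mul, abs_neg_one_pow, one_mul]
    _ ≤ ∑ j ∈ range k, (k.choose (j + 1) : ℝ) * |Q.eval (j + 1 : ℝ)| := by
        refine (abs_sum_le_sum_abs _ _).trans_eq (sum_congr rfl fun j _ => ?_)
        rw [abs_mul, abs_mul, abs_neg_one_pow, one_mul, Nat.abs_cast]
    _ ≤ ∑ j ∈ range k, (k.choose (j + 1) : ℝ) * M := by
        gcongr with j hj
        exact hM j (mem_range.1 hj)
    _ = (2 ^ k - 1) * M := by rw [← sum_mul, hsum]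

lemma abs_coeff_one_le {k : ℕ} {P : ℝ[X]} (hP : P.natDegree ≤ k) {M : ℝ}
    (hM : ∀ j ≤ k, |P.eval (j : ℝ)| ≤ M) : |P.coeff 1| ≤ (2 ^ k - 1) * (2 * M) := by
  obtain rfl | hk := k.eq_zero_or_pos
  · simp [coeff_eq_zero_of_natDegree_lt (hP.trans_lt one_pos)]
  have hdeg : P.divX.natDegree < k := by
    rw [natDegree_divX_eq_natDegree_tsub_one]
    omega
  have hslope (x : ℝ) : P.divX.eval x * x = P.eval x - P.eval 0 := by
    conv_rhs => rw [← divX_mul_X_add P]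
    simp
  have hcoeff : P.coeff 1 = P.divX.eval 0 := by rw [← coeff_zero_eq_eval_zero, coeff_divX]
  rw [hcoeff]
  refine abs_eval_zero_le_of_natDegree_lt hdeg fun j hj => ?_
  calc |P.divX.eval (j + 1 : ℝ)|
      ≤ |P.divX.eval (j + 1 : ℝ)| * |(j + 1 : ℝ)| :=
        le_mul_of_one_le_right (abs_nonneg _) (le_abs.2 (.inl (by simp)))
    _ = |P.eval (j + 1 : ℝ) - P.eval 0| := by rw [← abs_mul, hslope]
    _ ≤ |P.eval (j + 1 : ℝ)| + |P.eval 0| := abs_sub _ _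
    _ ≤ 2 * M := by
        have h₀ := hM 0 k.zero_le
        have h₁ := hM (j + 1) hj
        push_cast at h₀ h₁
        linarith

lemma coeff_one_X_pow_mul_one_sub_X_pow {R : Type*} [CommRing R] (s m : ℕ) :
    ((X ^ s * (1 - X) ^ m : R[X])).coeff 1
      = (if s = 1 then 1 else 0) - (if s = 0 then (m : R) else 0) := by
  have hcoeff (Q : R[X]) : Q.coeff 1 = (derivative Q).eval 0 := by
    rw [← coeff_zero_eq_eval_zero, coeff_derivative]
    simp
  rcases s with _ | _ | s <;> simp [hcoeff, derivative_pow]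

variable {ι R : Type*} [Fintype ι] [CommRing R]

/-- The multilinear extension of a set function `a`, restricted to the diagonal: its value at `q`
is the expected value of `a` on a random subset containing each point independently with
probability `q`. -/
noncomputable def diagonalExtension (a : Finset ι → R) : R[X] :=
  ∑ S : Finset ι, C (a S) * (X ^ #S * (1 - X) ^ (Fintype.card ι - #S))

lemma eval_diagonalExtension (a : Finset ι → R) (q : R) :
    (diagonalExtension a).eval q
      = ∑ S : Finset ι, a S * (q ^ #S * (1 - q) ^ (Fintype.card ι - #S)) := by
  simp [diagonalExtension, eval_finsetSum]

lemma diagonalExtension_sub (a b : Finset ι → R) :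
    diagonalExtension (a - b) = diagonalExtension a - diagonalExtension b := by
  simp [diagonalExtension, sub_mul]

lemma natDegree_diagonalExtension_le (a : Finset ι → R) :
    (diagonalExtension a).natDegree ≤ Fintype.card ι := by
  refine natDegree_sum_le_of_forall_le _ _ fun S _ => (natDegree_C_mul_le _ _).trans ?_
  have hS : #S ≤ Fintype.card ι := card_le_univ S
  have hX : (1 - X : R[X]).natDegree ≤ 1 :=
    (natDegree_sub_le _ _).trans (by simp [natDegree_X_le])
  calc (X ^ #S * (1 - X) ^ (Fintype.card ι - #S) : R[X]).natDegree
      ≤ #S + (Fintype.card ι - #S) * 1 :=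
        natDegree_mul_le_of_le (natDegree_X_pow_le _) (natDegree_pow_le_of_le _ hX)
    _ = Fintype.card ι := by omega

lemma eval_zero_diagonalExtension (a : Finset ι → R) : (diagonalExtension a).eval 0 = a ∅ := by
  rw [eval_diagonalExtension, sum_eq_single ∅] <;> simp +contextual

lemma coeff_one_diagonalExtension (a : Finset ι → R) :
    (diagonalExtension a).coeff 1 = ∑ i, a {i} - Fintype.card ι * a ∅ := by
  have hsingle : ∑ S : Finset ι, (if #S = 1 then a S else 0) = ∑ i, a {i} := by
    rw [← sum_filter, ← powerset_univ, ← powersetCard_eq_filter, powersetCard_one, sum_map]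
    rfl
  have hempty : ∑ S : Finset ι, (if #S = 0 then a S * (Fintype.card ι - #S : ℕ) else 0)
      = Fintype.card ι * a ∅ := by
    classical
    simp [mul_comm]
  simp_rw [diagonalExtension, finsetSum_coeff, coeff_C_mul, coeff_one_X_pow_mul_one_sub_X_pow,
    mul_sub, mul_ite, mul_one, mul_zero, sum_sub_distrib, hsingle, hempty]

lemma abs_singleton_le_of_abs_eval_diagonalExtension_le [Nonempty ι] {a : Finset ι → ℝ} {D M : ℝ}
    (hD : ∀ i, a {i} = D)
    (hM : ∀ j ≤ Fintype.card ι, |(diagonalExtension a).eval (j / Fintype.card ι : ℝ)| ≤ M) :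
    |D| ≤ 2 ^ (Fintype.card ι + 1) * M := by
  set k := Fintype.card ι with hk
  have hk₀ : (k : ℝ) ≠ 0 := mod_cast Fintype.card_ne_zero
  set P : ℝ[X] := (diagonalExtension a).comp (C (k : ℝ)⁻¹ * X) with hP
  have hdeg : P.natDegree ≤ k := by
    exact natDegree_comp_le.trans ((Nat.mul_le_mul (natDegree_diagonalExtension_le a)
      ((natDegree_C_mul_le _ _).trans natDegree_X_le)).trans_eq (mul_one _))
  have hcoeff : D = P.coeff 1 + a ∅ := by
    rw [hP, comp_C_mul_X_coeff, coeff_one_diagonalExtension, sum_congr rfl fun i _ => hD i,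
      sum_const, card_univ, ← hk, nsmul_eq_mul]
    field_simp
    ring
  have hslope : |P.coeff 1| ≤ (2 ^ k - 1) * (2 * M) := by
    refine abs_coeff_one_le hdeg fun j hj => ?_
    simpa [hP, div_eq_inv_mul] using hM j hj
  have hempty : |a ∅| ≤ M := by
    simpa [eval_zero_diagonalExtension] using hM 0 k.zero_le
  have hM₀ : 0 ≤ M := (abs_nonneg _).trans hempty
  calc |D| ≤ |P.coeff 1| + |a ∅| := hcoeff ▸ abs_add_le _ _
    _ ≤ (2 ^ k - 1) * (2 * M) + M := add_le_add hslope hempty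
    _ ≤ 2 ^ (k + 1) * M := by rw [pow_succ]; linarith

end Polynomial

lemma summable_norm_prod_pi {R : Type*} [NormedCommRing R] :
    ∀ {k : ℕ} {V : Fin k → Type*} {r : ∀ i, V i → R}, (∀ i, Summable fun u => ‖r i u‖) →
      Summable fun w : ∀ i, V i => ‖∏ i, r i (w i)‖
  | 0, _, _, _ => (hasSum_fintype _).summable
  | k + 1, V, r, hr => by
    have htail : Summable fun w : ∀ i : Fin k, V i.succ => ‖∏ i, r i.succ (w i)‖ :=
      summable_norm_prod_pi fun i => hr i.succ
    rw [← (Fin.consEquiv V).summable_iff]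
    refine ((hr 0).mul_norm htail).congr fun x => ?_
    simp [Fin.prod_univ_succ, Fin.consEquiv]

section Expectation

variable {V : Type*} {k : ℕ}

/-- The expected value of `g` on a `k`-tuple with independent entries, the `i`-th one drawn from
`r i`. The marginals `r i` may be arbitrary signed weights. -/
noncomputable def productLP (r : Fin k → V → ℝ) (g : (Fin k → V) → Bool) : ℝ :=
  ∑' w : Fin k → V, (∏ i, r i (w i)) * (if g w then 1 else 0)

lemma norm_prod_mul_indicator_le (r : Fin k → V → ℝ) (g : (Fin k → V) → Bool) (w : Fin k → V) :
    ‖(∏ i, r i (w i)) * (if g w then 1 else 0)‖ ≤ ‖∏ i, r i (w i)‖ := by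
  rw [norm_mul]
  exact mul_le_of_le_one_right (norm_nonneg _) (by split_ifs <;> simp)

lemma summable_prod_mul_indicator {r : Fin k → V → ℝ} (hr : ∀ i, Summable (r i))
    (g : (Fin k → V) → Bool) :
    Summable fun w : Fin k → V => (∏ i, r i (w i)) * (if g w then (1 : ℝ) else 0) :=
  (summable_norm_prod_pi fun i => (hr i).norm).of_norm_bounded (norm_prod_mul_indicator_le r g)

lemma abs_LP_le {p : V → ℝ} (hp : Summable p) (g : (Fin k → V) → Bool) :
    |LP p g| ≤ ∑' w : Fin k → V, ‖∏ i, p (w i)‖ :=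
  tsum_of_norm_bounded (summable_norm_prod_pi fun _ => hp.norm).hasSum
    (norm_prod_mul_indicator_le (fun _ => p) g)

lemma productLP_smul (c : Fin k → ℝ) (r : Fin k → V → ℝ) (g : (Fin k → V) → Bool) :
    productLP (fun i => c i • r i) g = (∏ i, c i) * productLP r g := by
  simp only [productLP, Pi.smul_apply, smul_eq_mul, Finset.prod_mul_distrib, mul_assoc,
    tsum_mul_left]

lemma productLP_add {r s : Fin k → V → ℝ} (hr : ∀ i, Summable (r i)) (hs : ∀ i, Summable (s i))
    (g : (Fin k → V) → Bool) :
    productLP (r + s) g = ∑ S : Finset (Fin k), productLP (S.piecewise r s) g := by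
  have hsum (S : Finset (Fin k)) (i : Fin k) : Summable (S.piecewise r s i) :=
    S.piecewise_cases r s Summable (hr i) (hs i)
  simp_rw [productLP]
  rw [← Summable.tsum_finsetSum fun S _ => summable_prod_mul_indicator (hsum S) g]
  refine tsum_congr fun w => ?_
  have hprod : ∏ i, (r i (w i) + s i (w i))
      = ∑ S : Finset (Fin k), ∏ i, S.piecewise r s i (w i) := by
    refine ((MultilinearMap.mkPiAlgebra ℝ (Fin k) ℝ).map_add_univ _ _).trans
      (Finset.sum_congr rfl fun S _ => ?_)
    rw [MultilinearMap.mkPiAlgebra_apply]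
    exact Finset.prod_congr rfl fun i _ => (apply_ite (fun f : V → ℝ => f (w i)) _ _ _).symm
  rw [← Finset.sum_mul, ← hprod]
  rfl

lemma LP_smul_add_smul (x y : ℝ) {p q : V → ℝ} (hp : Summable p) (hq : Summable q)
    (g : (Fin k → V) → Bool) :
    LP (x • p + y • q) g = ∑ S : Finset (Fin k),
      productLP (S.piecewise (fun _ => p) fun _ => q) g * (x ^ S.card * y ^ (k - S.card)) := by
  have hadd : LP (x • p + y • q) g
      = ∑ S : Finset (Fin k), productLP (S.piecewise (fun _ => x • p) fun _ => y • q) g :=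
    productLP_add (fun _ => hp.const_smul x) (fun _ => hq.const_smul y) g
  rw [hadd]
  refine Finset.sum_congr rfl fun S _ => ?_
  have hsmul : (S.piecewise (fun _ => x • p) fun _ => y • q)
      = fun i => S.piecewise (fun _ => x) (fun _ => y) i •
        S.piecewise (fun _ => p) (fun _ => q) i := by
    ext i : 1
    by_cases hi : i ∈ S <;> simp [hi]
  rw [hsmul, productLP_smul, mul_comm, Finset.prod_piecewise]
  simp [Finset.card_sdiff]

lemma productLP_comp_perm {g : (Fin k → V) → Bool} (hg : IsSymmetric g) (r : Fin k → V → ℝ)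
    (σ : Equiv.Perm (Fin k)) : productLP (r ∘ σ) g = productLP r g := by
  rw [productLP, productLP, ← (σ.symm.arrowCongr (Equiv.refl V)).tsum_eq]
  refine tsum_congr fun w => ?_
  change (∏ i, r (σ i) (w (σ i))) * (if g (w ∘ σ) then 1 else 0) = _
  rw [hg, Equiv.prod_comp σ fun i => r i (w i)]

end Expectation

section Planting

open Classical in
/-- The expected value of `g` on a `k`-tuple whose entries indexed by `S` are equal to `v` and whose
remaining entries are drawn independently from `p`. -/
noncomputable def plantedLP {V : Type*} {k : ℕ} (v : V) (p : V → ℝ) (g : (Fin k → V) → Bool)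
    (S : Finset (Fin k)) : ℝ :=
  productLP (S.piecewise (fun _ => Pi.single v 1) fun _ => p) g

variable {V : Type*} {k : ℕ}

lemma productLP_cons_single [DecidableEq V] (v : V) (r : Fin k → V → ℝ)
    (g : (Fin (k + 1) → V) → Bool) :
    productLP (Fin.cons (Pi.single v 1) r) g = productLP r (proj v g) := by
  have hinj : Function.Injective fun u : Fin k → V => (Fin.cons v u : Fin (k + 1) → V) :=
    Fin.cons_right_injective (α := fun _ => V) v
  rw [productLP, ← hinj.tsum_eq, productLP]
  · refine tsum_congr fun u => ?_
    simp only [Fin.prod_univ_succ, Fin.cons_zero, Fin.cons_succ, Pi.single_eq_same, one_mul]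
    rfl
  · intro w hw
    have hw₀ : w 0 = v := by
      contrapose! hw
      simp [Fin.prod_univ_succ, hw]
    exact ⟨Fin.tail w, hw₀ ▸ Fin.cons_self_tail w⟩

lemma plantedLP_singleton {g : (Fin (k + 1) → V) → Bool} (hg : IsSymmetric g) (v : V) (p : V → ℝ)
    (i : Fin (k + 1)) : plantedLP v p g {i} = LP p (proj v g) := by
  classical
  set δ : V → ℝ := Pi.single v 1
  set r : Fin (k + 1) → V → ℝ := Fin.cons δ fun _ => p with hr
  have hupdate : r = Function.update (fun _ => p) 0 δ := by
    ext j : 1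
    cases j using Fin.cases <;> simp [hr]
  have hswap : ({i} : Finset (Fin (k + 1))).piecewise (fun _ => δ) (fun _ => p)
      = r ∘ Equiv.swap 0 i := by
    rw [Finset.piecewise_singleton, hupdate, Function.update_comp_equiv]
    simp [Function.comp_def]
  calc plantedLP v p g {i} = productLP (r ∘ Equiv.swap 0 i) g := congrArg (productLP · g) hswap
    _ = productLP r g := productLP_comp_perm hg r _
    _ = LP p (proj v g) := productLP_cons_single v _ g

open Classical in
lemma mix_eq_smul_add_smul (q : ℝ) (v : V) (p : V → ℝ) :
    mix q v p = q • Pi.single v 1 + (1 - q) • p := by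
  ext u
  simp [mix, Pi.single_apply]

lemma summable_mix (q : ℝ) (v : V) {p : V → ℝ} (hp : Summable p) : Summable (mix q v p) := by
  classical
  rw [mix_eq_smul_add_smul]
  exact ((hasSum_pi_single v 1).summable.const_smul q).add (hp.const_smul (1 - q))

lemma LP_mix (q : ℝ) (v : V) {p : V → ℝ} (hp : Summable p) (g : (Fin k → V) → Bool) :
    LP (mix q v p) g = (diagonalExtension (plantedLP v p g)).eval q := by
  classical
  rw [mix_eq_smul_add_smul, LP_smul_add_smul _ _ (hasSum_pi_single v 1).summable hp,
    eval_diagonalExtension, Fintype.card_fin]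
  rfl

end Planting

section IPM

variable {V : Type*} {k : ℕ} {G : Set ((Fin k → V) → Bool)} {p₁ p₂ : V → ℝ}

lemma IPM_nonneg : 0 ≤ IPM G p₁ p₂ :=
  Real.iSup_nonneg fun _ => Real.iSup_nonneg fun _ => abs_nonneg _

lemma IPM_le {C : ℝ} (hC : 0 ≤ C) (h : ∀ g ∈ G, |LP p₁ g - LP p₂ g| ≤ C) : IPM G p₁ p₂ ≤ C :=
  Real.iSup_le (fun g => Real.iSup_le (h g) hC) hC

lemma abs_LP_sub_le_IPM (h₁ : Summable p₁) (h₂ : Summable p₂) {g : (Fin k → V) → Bool}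
    (hg : g ∈ G) : |LP p₁ g - LP p₂ g| ≤ IPM G p₁ p₂ := by
  obtain ⟨B, hB⟩ : ∃ B, ∀ g : (Fin k → V) → Bool, |LP p₁ g - LP p₂ g| ≤ B :=
    ⟨_, fun g => (abs_sub _ _).trans (add_le_add (abs_LP_le h₁ g) (abs_LP_le h₂ g))⟩
  have hbdd : BddAbove (Set.range fun g => ⨆ _ : g ∈ G, |LP p₁ g - LP p₂ g|) := by
    refine ⟨B, ?_⟩
    rintro _ ⟨g', rfl⟩
    exact Real.iSup_le (fun _ => hB g') ((abs_nonneg _).trans (hB g'))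
  exact (ciSup_pos hg).ge.trans (le_ciSup hbdd g)

end IPM

theorem stmt6_general {V : Type*} {n : ℕ} {G : Set ((Fin (n + 1) → V) → Bool)}
    (hG : IsDistinguishingClass G) {p₁ p₂ : V → ℝ} (h₁ : Summable p₁) (h₂ : Summable p₂) (v : V) :
    ∃ j : ℕ, j ≤ n + 1 ∧ IPM (proj v '' G) p₁ p₂
      ≤ 2 ^ (n + 2) * IPM G (mix (j / (n + 1)) v p₁) (mix (j / (n + 1)) v p₂) := by
  obtain ⟨j, hj, hmax⟩ := Finset.exists_max_image (Finset.range (n + 2))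
    (fun j : ℕ => IPM G (mix (j / (n + 1)) v p₁) (mix (j / (n + 1)) v p₂)) ⟨0, by simp⟩
  refine ⟨j, Nat.lt_succ_iff.1 (Finset.mem_range.1 hj),
    IPM_le (mul_nonneg (by positivity) IPM_nonneg) ?_⟩
  rintro _ ⟨g, hg, rfl⟩
  have hsingle (i : Fin (n + 1)) : (plantedLP v p₁ g - plantedLP v p₂ g) {i}
      = LP p₁ (proj v g) - LP p₂ (proj v g) := by
    simp only [Pi.sub_apply, plantedLP_singleton (hG g hg)]
  have hnode (i : ℕ) (hi : i ≤ n + 1) :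
      |(diagonalExtension (plantedLP v p₁ g - plantedLP v p₂ g)).eval (i / (n + 1) : ℝ)|
        ≤ IPM G (mix (j / (n + 1)) v p₁) (mix (j / (n + 1)) v p₂) := by
    rw [diagonalExtension_sub, Polynomial.eval_sub, ← LP_mix _ v h₁, ← LP_mix _ v h₂]
    exact (abs_LP_sub_le_IPM (summable_mix _ v h₁) (summable_mix _ v h₂) hg).trans
      (hmax i (Finset.mem_range.2 (Nat.lt_succ_of_le hi)))
  simpa using abs_singleton_le_of_abs_eval_diagonalExtension_le hsingle (by simpa using hnode)

/-- the mixing lemma (Lemma `lowerbound`), stated with `k = n + 2 ≥ 2`. -/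
theorem stmt6 (V : Type) [Countable V] (n : ℕ)
    (G : Set ((Fin (n + 2) → V) → Bool)) (hG : IsDistinguishingClass G)
    (p₁ p₂ : V → ℝ) (h₁ : IsDist p₁) (h₂ : IsDist p₂)
    (v : V) (ε : ℝ) (hv : IPM (proj v '' G) p₁ p₂ ≥ ε) :
    ∃ j : ℕ, j ≤ n + 2 ∧
      IPM G (mix ((j : ℝ) / (n + 2)) v p₁) (mix ((j : ℝ) / (n + 2)) v p₂)
        ≥ ε / 2 ^ (3 * (n + 2) ^ 2) := by
  obtain ⟨j, hj, hle⟩ := stmt6_general hG h₁.2.summable h₂.2.summable v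
  refine ⟨j, hj, (div_le_iff₀' (by positivity)).2 (hv.trans ?_)⟩
  have hcast : ((n + 1 : ℕ) : ℝ) + 1 = n + 2 := by push_cast; ring
  rw [hcast] at hle
  refine hle.trans (mul_le_mul_of_nonneg_right ?_ IPM_nonneg)
  exact pow_le_pow_right₀ one_le_two (by nlinarith)

end GraphDisc
end

section
/- Let V = ℕ. There exists a single symmetric Boolean function g : V × V → {0,1} (a 2-distinguisher) such that: for every family D of Boolean functions d : V → {0,1} with finite VC dimension and every ε > 0, there exist probability distributions p₁, p₂ on V with IPM_D(p₁,p₂) < ε and |L_{p₁}(g) − L_{p₂}(g)| > 1/2. -/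
open scoped BigOperators

namespace GraphDisc

/-!
Let `g` be a graph with the extension property of the Rado graph: over any two disjoint finite sets
`A`, `B` there are infinitely many vertices joined to all of `A` and to none of `B`. Start from
empty `A` and `B` and enlarge them `k` times. Each time, pick `2 * m` new vertices over `A` and `B`,
arranged in `m` pairs; send one vertex of each pair to `A` and the other to `B`, with random signs.
By the Sauer–Shelah lemma `D` has only polynomially many traces on the new vertices, so by
Hoeffding's inequality and a union bound some choice of signs gives every `d ∈ D` discrepancy at
most `t * m`. In the end `D` barely distinguishes the uniform distributions on `A` and `B`, although
`A` is a clique and `B` is independent, up to the pairs of vertices chosen in the same round: these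
make up a proportion of at most `1 / k`.
-/

section

open Finset Filter Function Rel

section SauerShelah

variable {X ι : Type*} {n : ℕ}

lemma vcDim_le_coe_iff {D : Set (X → Bool)} :
    vcDim D ≤ n ↔ ∀ T : Finset X, Shatters D T → #T ≤ n := by
  simp [vcDim]

lemma Shatters.map {D : Set (X → Bool)} {f : ι ↪ X} {T : Finset ι}
    (hT : Shatters ((· ∘ f) '' D) T) : Shatters D (T.map f) := by
  intro b
  obtain ⟨_, ⟨d, hd, rfl⟩, hdb⟩ := hT (b ∘ f)
  exact ⟨d, hd, forall_mem_map.2 hdb⟩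

lemma vcDim_image_comp_le (D : Set (X → Bool)) (f : ι ↪ X) :
    vcDim ((· ∘ f) '' D) ≤ vcDim D :=
  iSup₂_le fun T hT ↦ le_iSup₂_of_le (T.map f) (Shatters.map hT) (by rw [card_map])

variable [Fintype ι]

lemma ncard_le_sum_choose {D : Set (ι → Bool)} (hD : vcDim D ≤ n) :
    D.ncard ≤ ∑ k ∈ Iic n, (Fintype.card ι).choose k := by
  classical
  let support : (ι → Bool) → Finset ι := fun d ↦ {i | d i}
  have support_injective : Injective support := fun d d' h ↦
    funext fun i ↦ Bool.eq_iff_iff.2 (by simpa [support] using Finset.ext_iff.1 h i)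
  let F : Finset (Finset ι) := D.toFinset.image support
  have card_F : #F = D.ncard := by
    rw [card_image_of_injective _ support_injective, Set.ncard_eq_toFinset_card']
  have vcDim_F : F.vcDim ≤ n := Finset.sup_le fun B hB ↦ vcDim_le_coe_iff.1 hD B fun b ↦ by
    obtain ⟨_, hu, hBu⟩ := mem_shatterer.1 hB (filter_subset (b · = true) B)
    obtain ⟨d, hd, rfl⟩ := mem_image.1 hu
    refine ⟨d, Set.mem_toFinset.1 hd, fun i hi ↦ Bool.eq_iff_iff.2 ?_⟩
    simpa [support, hi] using Finset.ext_iff.1 hBu i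
  calc D.ncard = #F := card_F.symm
    _ ≤ #F.shatterer := card_le_card_shatterer F
    _ ≤ ∑ k ∈ Iic F.vcDim, (Fintype.card ι).choose k := card_shatterer_le_sum_vcDim
    _ ≤ ∑ k ∈ Iic n, (Fintype.card ι).choose k :=
      sum_le_sum_of_subset (Iic_subset_Iic.2 vcDim_F)

lemma ncard_le_mul_card_pow [Nonempty ι] {D : Set (ι → Bool)} (hD : vcDim D ≤ n) :
    D.ncard ≤ (n + 1) * Fintype.card ι ^ n :=
  calc D.ncard ≤ ∑ k ∈ Iic n, (Fintype.card ι).choose k := ncard_le_sum_choose hD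
    _ ≤ ∑ _k ∈ Iic n, Fintype.card ι ^ n := sum_le_sum fun k hk ↦
      (Nat.choose_le_pow _ k).trans (Nat.pow_le_pow_right Fintype.card_pos (mem_Iic.1 hk))
    _ = (n + 1) * Fintype.card ι ^ n := by simp

end SauerShelah

section Hoeffding

variable {ι κ : Type*} [Fintype ι]

/-- The Rademacher sum `∑ i, ± x i`, with the signs given by `s`. -/
noncomputable def signedSum (s : ι → ℤˣ) (x : ι → ℝ) : ℝ := ∑ i, (s i : ℤ) * x i

lemma signedSum_neg (s : ι → ℤˣ) (x : ι → ℝ) : signedSum s (-x) = -signedSum s x := by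
  simp [signedSum]

lemma signedSum_smul (s : ι → ℤˣ) (t : ℝ) (x : ι → ℝ) :
    signedSum s (t • x) = t * signedSum s x := by
  simp only [signedSum, mul_sum, Pi.smul_apply, smul_eq_mul, mul_left_comm]

section DecidableEq

variable [DecidableEq ι]

lemma sum_exp_signedSum (x : ι → ℝ) :
    ∑ s, Real.exp (signedSum s x) = ∏ i, 2 * Real.cosh (x i) := by
  have sum_units (y : ℝ) : ∑ u : ℤˣ, Real.exp ((u : ℤ) * y) = 2 * Real.cosh y := by
    simp [UnitsInt.univ, Real.cosh_eq, mul_div_cancel₀]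
  simp_rw [signedSum, Real.exp_sum, ← sum_units, Fintype.prod_sum]

lemma sum_exp_signedSum_le (x : ι → ℝ) :
    ∑ s, Real.exp (signedSum s x) ≤ 2 ^ Fintype.card ι * Real.exp ((∑ i, x i ^ 2) / 2) :=
  calc ∑ s, Real.exp (signedSum s x) = ∏ i, 2 * Real.cosh (x i) := sum_exp_signedSum x
    _ ≤ ∏ i, 2 * Real.exp (x i ^ 2 / 2) :=
      prod_le_prod (fun i _ ↦ by positivity) fun i _ ↦
        mul_le_mul_of_nonneg_left (Real.cosh_le_exp_half_sq (x i)) zero_le_two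
    _ = 2 ^ Fintype.card ι * Real.exp ((∑ i, x i ^ 2) / 2) := by
      rw [prod_mul_distrib, ← Real.exp_sum, sum_div, prod_const, card_univ]

variable {t : ℝ}

lemma card_lt_signedSum_mul_exp_le (ht : 0 ≤ t) {x : ι → ℝ} (hx : ∀ i, |x i| ≤ 1) :
    #{s | t * Fintype.card ι < signedSum s x} * Real.exp (Fintype.card ι * (t ^ 2 / 2)) ≤
      2 ^ Fintype.card ι := by
  set m := Fintype.card ι with hm
  have sum_sq_le : ∑ i, (t • x) i ^ 2 ≤ m * t ^ 2 := by
    calc ∑ i, (t • x) i ^ 2 ≤ ∑ _i : ι, t ^ 2 := sum_le_sum fun i _ ↦ by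
          rw [Pi.smul_apply, smul_eq_mul, mul_pow]
          exact mul_le_of_le_one_right (sq_nonneg t) ((sq_le_one_iff_abs_le_one _).2 (hx i))
      _ = m * t ^ 2 := by simp [hm]
  have chernoff : #{s | t * m < signedSum s x} * Real.exp (t * (t * m)) ≤
      2 ^ m * Real.exp (m * (t ^ 2 / 2)) :=
    calc #{s | t * m < signedSum s x} * Real.exp (t * (t * m))
        = ∑ s with t * m < signedSum s x, Real.exp (t * (t * m)) := by simp
      _ ≤ ∑ s with t * m < signedSum s x, Real.exp (signedSum s (t • x)) := by
        refine sum_le_sum fun s hs ↦ ?_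
        rw [signedSum_smul]
        have := (mem_filter.1 hs).2.le
        gcongr
      _ ≤ ∑ s, Real.exp (signedSum s (t • x)) :=
        sum_le_univ_sum_of_nonneg fun s ↦ (Real.exp_pos _).le
      _ ≤ 2 ^ m * Real.exp ((∑ i, (t • x) i ^ 2) / 2) := sum_exp_signedSum_le _
      _ ≤ 2 ^ m * Real.exp (m * (t ^ 2 / 2)) := by
        rw [← mul_div_assoc]
        gcongr
  refine le_of_mul_le_mul_right ?_ (Real.exp_pos (m * (t ^ 2 / 2)))
  rwa [mul_assoc, ← Real.exp_add, show m * (t ^ 2 / 2) + m * (t ^ 2 / 2) = t * (t * m) by ring]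

lemma card_lt_abs_signedSum_mul_exp_le (ht : 0 ≤ t) {x : ι → ℝ} (hx : ∀ i, |x i| ≤ 1) :
    #{s | t * Fintype.card ι < |signedSum s x|} * Real.exp (Fintype.card ι * (t ^ 2 / 2)) ≤
      2 * 2 ^ Fintype.card ι := by
  have card_le : (#{s | t * Fintype.card ι < |signedSum s x|} : ℝ) ≤
      #{s | t * Fintype.card ι < signedSum s x} + #{s | t * Fintype.card ι < signedSum s (-x)} := by
    simp_rw [signedSum_neg, lt_abs, filter_or]
    exact mod_cast card_union_le _ _
  calc _ ≤ _ := mul_le_mul_of_nonneg_right card_le (Real.exp_pos _).le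
    _ ≤ 2 ^ Fintype.card ι + 2 ^ Fintype.card ι := by
      rw [add_mul]
      exact add_le_add (card_lt_signedSum_mul_exp_le ht hx)
        (card_lt_signedSum_mul_exp_le ht (by simpa using hx))
    _ = 2 * 2 ^ Fintype.card ι := (two_mul _).symm

end DecidableEq

lemma exists_forall_abs_signedSum_le {t : ℝ} (ht : 0 ≤ t) {K : Finset κ} {x : κ → ι → ℝ}
    (hx : ∀ k ∈ K, ∀ i, |x k i| ≤ 1)
    (hK : 2 * #K < Real.exp (Fintype.card ι * (t ^ 2 / 2))) :
    ∃ s, ∀ k ∈ K, |signedSum s (x k)| ≤ t * Fintype.card ι := by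
  classical
  by_contra! h
  let bad (k : κ) : Finset (ι → ℤˣ) := {s | t * Fintype.card ι < |signedSum s (x k)|}
  have univ_subset : univ ⊆ K.biUnion bad := fun s _ ↦ by simpa [bad] using h s
  have two_pow_le : (2 : ℝ) ^ Fintype.card ι ≤ ∑ k ∈ K, (#(bad k) : ℝ) := by
    have := (card_le_card univ_subset).trans card_biUnion_le
    rw [card_univ, Fintype.card_fun, Fintype.card_units_int] at this
    exact mod_cast this
  have : 2 ^ Fintype.card ι * Real.exp (Fintype.card ι * (t ^ 2 / 2)) ≤
      2 ^ Fintype.card ι * (2 * #K) :=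
    calc _ ≤ ∑ k ∈ K, #(bad k) * Real.exp (Fintype.card ι * (t ^ 2 / 2)) := by
          rw [← sum_mul]
          gcongr
      _ ≤ ∑ _k ∈ K, 2 * 2 ^ Fintype.card ι :=
        sum_le_sum fun k hk ↦ card_lt_abs_signedSum_mul_exp_le ht (hx k hk)
      _ = 2 ^ Fintype.card ι * (2 * #K) := by
        rw [sum_const, nsmul_eq_mul]
        ring
  exact hK.not_ge (le_of_mul_le_mul_left this (by positivity))

end Hoeffding

section Discrepancy

lemma eventually_mul_pow_lt_exp (C : ℝ) (n : ℕ) {b : ℝ} (hb : 0 < b) :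
    ∀ᶠ m : ℕ in atTop, C * m ^ n < Real.exp (m * b) := by
  have h := (((isLittleO_pow_exp_pos_mul_atTop n hb).const_mul_left C).comp_tendsto
    tendsto_natCast_atTop_atTop).bound (show (0 : ℝ) < 1 / 2 by norm_num)
  filter_upwards [h] with m hm
  simp only [comp_apply, Real.norm_eq_abs, Real.abs_exp, mul_comm b] at hm
  linarith [le_abs_self (C * (m : ℝ) ^ n), Real.exp_pos (m * b)]

variable {V : Type*} {D : Set (V → Bool)} {A B A' B' : Finset V} {c c' : ℝ}

/-- No function of `D` takes the value `true` on `A` and on `B` with multiplicities that differ by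
more than `c`. -/
def DiscrepancyLE (D : Set (V → Bool)) (A B : Finset V) (c : ℝ) : Prop :=
  ∀ d ∈ D, |(#{v ∈ A | d v} : ℝ) - #{v ∈ B | d v}| ≤ c

lemma DiscrepancyLE.union [DecidableEq V] (h : DiscrepancyLE D A B c)
    (h' : DiscrepancyLE D A' B' c') (hA : Disjoint A A') (hB : Disjoint B B') :
    DiscrepancyLE D (A ∪ A') (B ∪ B') (c + c') := by
  intro d hd
  rw [filter_union, filter_union, card_union_of_disjoint (disjoint_filter_filter hA),
    card_union_of_disjoint (disjoint_filter_filter hB), Nat.cast_add, Nat.cast_add,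
    add_sub_add_comm]
  exact (abs_add_le _ _).trans (add_le_add (h d hd) (h' d hd))

lemma exists_forall_abs_card_sub_card_le {ι : Type*} [Fintype ι]
    {E : Set (ι × ℤˣ → Bool)} {t : ℝ} (ht : 0 ≤ t)
    (hE : 2 * E.ncard < Real.exp (Fintype.card ι * (t ^ 2 / 2))) :
    ∃ s : ι → ℤˣ, ∀ d ∈ E, |(#{i | d (i, s i)} : ℝ) - #{i | d (i, -s i)}| ≤
      t * Fintype.card ι := by
  classical
  let x (d : ι × ℤˣ → Bool) (i : ι) : ℝ := (if d (i, 1) then 1 else 0) - if d (i, -1) then 1 else 0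
  have abs_x_le (d : ι × ℤˣ → Bool) (i : ι) : |x d i| ≤ 1 := by
    dsimp only [x]
    split_ifs <;> norm_num
  have signedSum_x (s : ι → ℤˣ) (d : ι × ℤˣ → Bool) :
      signedSum s (x d) = #{i | d (i, s i)} - #{i | d (i, -s i)} := by
    simp only [signedSum, card_filter, Nat.cast_sum, Nat.cast_ite, Nat.cast_one, Nat.cast_zero,
      ← sum_sub_distrib]
    refine sum_congr rfl fun i _ ↦ ?_
    rcases Int.units_eq_one_or (s i) with hs | hs <;> simp [hs, x]
  rw [Set.ncard_eq_toFinset_card'] at hE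
  obtain ⟨s, hs⟩ := exists_forall_abs_signedSum_le ht (fun d _ ↦ abs_x_le d) hE
  exact ⟨s, fun d hd ↦ signedSum_x s d ▸ hs d (Set.mem_toFinset.2 hd)⟩

lemma exists_discrepancyLE_of_embedding {ι : Type*} [Fintype ι] {t : ℝ} (ht : 0 ≤ t)
    (P : ι × ℤˣ ↪ V)
    (hP : 2 * ((· ∘ P) '' D).ncard < Real.exp (Fintype.card ι * (t ^ 2 / 2))) :
    ∃ A B : Finset V, ↑A ⊆ Set.range P ∧ ↑B ⊆ Set.range P ∧ Disjoint A B ∧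
      #A = Fintype.card ι ∧ #B = Fintype.card ι ∧ DiscrepancyLE D A B (t * Fintype.card ι) := by
  obtain ⟨s, hs⟩ := exists_forall_abs_card_sub_card_le ht hP
  let half (s : ι → ℤˣ) : ι ↪ V :=
    ⟨fun i ↦ P (i, s i), fun i j h ↦ congrArg Prod.fst (P.injective h)⟩
  have card_half (s : ι → ℤˣ) (d : V → Bool) :
      #{v ∈ univ.map (half s) | d v} = #{i | d (P (i, s i))} := by
    rw [filter_map, card_map]
    rfl
  have half_subset (s : ι → ℤˣ) : ↑(univ.map (half s)) ⊆ Set.range P := by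
    rw [coe_map]
    rintro _ ⟨i, -, rfl⟩
    exact ⟨(i, s i), rfl⟩
  have half_disjoint : Disjoint (univ.map (half s)) (univ.map (half (-s))) := by
    simp only [Finset.disjoint_left, Finset.mem_map, mem_univ, true_and]
    rintro _ ⟨i, rfl⟩ ⟨j, hj⟩
    obtain ⟨rfl, h⟩ := Prod.mk.inj (P.injective hj)
    exact units_ne_neg_self _ h.symm
  refine ⟨univ.map (half s), univ.map (half (-s)), half_subset s, half_subset (-s), half_disjoint,
    by simp, by simp, fun d hd ↦ ?_⟩
  simpa [card_half] using hs (d ∘ P) ⟨d, hd, rfl⟩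

lemma exists_discrepancyLE_of_infinite (hD : vcDim D ≠ ⊤) {t : ℝ} (ht : 0 < t) :
    ∃ m : ℕ, 0 < m ∧ ∀ S : Set V, S.Infinite → ∃ A B : Finset V, ↑A ⊆ S ∧ ↑B ⊆ S ∧
      Disjoint A B ∧ #A = m ∧ #B = m ∧ DiscrepancyLE D A B (t * m) := by
  obtain ⟨n, hn⟩ := ENat.ne_top_iff_exists.1 hD
  obtain ⟨m, hm, hm0⟩ := ((eventually_mul_pow_lt_exp (2 * (n + 1) * 2 ^ n) n
    (show 0 < t ^ 2 / 2 by positivity)).and (eventually_gt_atTop 0)).exists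
  have : NeZero m := ⟨hm0.ne'⟩
  refine ⟨m, hm0, fun S hS ↦ ?_⟩
  obtain ⟨T, hTS, hT⟩ := hS.exists_subset_card_eq (m * 2)
  obtain ⟨P, hPT⟩ : ∃ P : Fin m × ℤˣ ↪ V, Set.range P ⊆ T :=
    Embedding.exists_of_card_le_finset (by simp [hT])
  have trace_le : ((· ∘ P) '' D).ncard ≤ (n + 1) * (m * 2) ^ n := by
    simpa using ncard_le_mul_card_pow ((vcDim_image_comp_le D P).trans hn.ge)
  have trace_lt : 2 * (((· ∘ P) '' D).ncard : ℝ) < Real.exp (m * (t ^ 2 / 2)) :=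
    calc 2 * (((· ∘ P) '' D).ncard : ℝ) ≤ 2 * ((n + 1) * (m * 2) ^ n) := by
          gcongr
          exact mod_cast trace_le
      _ = 2 * (n + 1) * 2 ^ n * m ^ n := by ring
      _ < Real.exp (m * (t ^ 2 / 2)) := hm
  obtain ⟨A, B, hA, hB, h⟩ :=
    exists_discrepancyLE_of_embedding ht.le P (by rwa [Fintype.card_fin])
  rw [Fintype.card_fin] at h
  exact ⟨A, B, (hA.trans hPT).trans hTS, (hB.trans hPT).trans hTS, h⟩

end Discrepancy

section UniformMass

variable {V : Type*} {A B : Finset V}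

/-- The mass function of the uniform distribution on `A`; it is zero if `A` is empty. -/
noncomputable def uniformMass (A : Finset V) : V → ℝ := (A : Set V).indicator fun _ ↦ (#A : ℝ)⁻¹

lemma uniformMass_of_mem {v : V} (hv : v ∈ A) : uniformMass A v = (#A : ℝ)⁻¹ :=
  Set.indicator_of_mem (mem_coe.2 hv) _

lemma uniformMass_of_notMem {v : V} (hv : v ∉ A) : uniformMass A v = 0 :=
  Set.indicator_of_notMem (mem_coe.not.2 hv) _

lemma isDist_uniformMass (hA : A.Nonempty) : IsDist (uniformMass A) := by
  refine ⟨fun v ↦ Set.indicator_nonneg (fun _ _ ↦ by positivity) v, ?_⟩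
  have sum_eq : ∑ v ∈ A, uniformMass A v = 1 := by
    rw [sum_congr rfl fun v ↦ uniformMass_of_mem, sum_const, nsmul_eq_mul,
      mul_inv_cancel₀ (by simpa using hA.ne_empty)]
  exact sum_eq ▸ hasSum_sum_of_ne_finset_zero fun v ↦ uniformMass_of_notMem

lemma LP1_uniformMass (A : Finset V) (d : V → Bool) :
    LP1 (uniformMass A) d = #{v ∈ A | d v} / #A := by
  rw [LP1, tsum_eq_sum fun v hv ↦ by rw [uniformMass_of_notMem hv, zero_mul],
    sum_congr rfl fun v hv ↦ by rw [uniformMass_of_mem hv], ← mul_sum, sum_boole,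
    inv_mul_eq_div]

lemma LP2_uniformMass (A : Finset V) (g : V → V → Bool) :
    LP2 (uniformMass A) g = #(interedges (g · · = true) A A) / #A ^ 2 := by
  have mass_of_notMem (w : V × V) (hw : w ∉ A ×ˢ A) :
      uniformMass A w.1 * uniformMass A w.2 = 0 := by
    rw [mem_product, not_and_or] at hw
    exact mul_eq_zero.2 (hw.imp uniformMass_of_notMem uniformMass_of_notMem)
  have mass_of_mem (w : V × V) (hw : w ∈ A ×ˢ A) :
      uniformMass A w.1 * uniformMass A w.2 = ((#A : ℝ) ^ 2)⁻¹ := by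
    rw [mem_product] at hw
    rw [uniformMass_of_mem hw.1, uniformMass_of_mem hw.2, sq, mul_inv]
  rw [LP2, tsum_eq_sum fun w hw ↦ by rw [mass_of_notMem w hw, zero_mul],
    sum_congr rfl fun w hw ↦ by rw [mass_of_mem w hw], ← mul_sum, sum_boole, inv_mul_eq_div,
    interedges]

lemma LP2_uniformMass_eq_one_sub (hA : A.Nonempty) (g : V → V → Bool) :
    LP2 (uniformMass A) g = 1 - #(interedges (g · · = false) A A) / #A ^ 2 := by
  have hA' : (#A : ℝ) ≠ 0 := by simpa using hA.ne_empty
  have card_add : (#(interedges (g · · = true) A A) + #(interedges (g · · = false) A A) : ℝ) =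
      #A ^ 2 := by
    rw [sq]
    simpa using congrArg (Nat.cast (R := ℝ))
      (card_interedges_add_card_interedges_compl (g · · = true) A A)
  rw [LP2_uniformMass, eq_sub_iff_add_eq, ← add_div, card_add, div_self (pow_ne_zero 2 hA')]

lemma DiscrepancyLE.IPM1_uniformMass_le {D : Set (V → Bool)} {c : ℝ} (h : DiscrepancyLE D A B c)
    (hc : 0 ≤ c) (hAB : #A = #B) : IPM1 D (uniformMass A) (uniformMass B) ≤ c / #A := by
  have : 0 ≤ c / #A := by positivity
  refine Real.iSup_le (fun d ↦ Real.iSup_le (fun hd ↦ ?_) this) this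
  rw [LP1_uniformMass, LP1_uniformMass, ← hAB, ← sub_div, abs_div, Nat.abs_cast]
  gcongr
  exact h d hd

end UniformMass

section ExtensionProperty

variable {V : Type*} {g : V → V → Bool}

/-- The extension property of the Rado graph. Asking for infinitely many vertices over `A` and `B`
makes it possible to choose them outside any given finite set. -/
def HasExtensionProperty (g : V → V → Bool) : Prop :=
  ∀ A B : Finset V, Disjoint A B →
    {v | (∀ a ∈ A, g v a = true) ∧ ∀ b ∈ B, g v b = false}.Infinite

lemma exists_infinite_fibers (V : Type*) [Infinite V] :
    ∃ f : V → Finset V, ∀ A, (f ⁻¹' {A}).Infinite := by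
  obtain ⟨e⟩ : Nonempty (V ≃ Finset V × V) := by
    rw [← Cardinal.eq, Cardinal.mk_prod, Cardinal.lift_id, Cardinal.lift_id,
      Cardinal.mk_finset_of_infinite, Cardinal.mul_eq_self (Cardinal.aleph0_le_mk V)]
  refine ⟨fun v ↦ (e v).1, fun A ↦ Set.infinite_of_injective_forall_mem
    (f := fun v ↦ e.symm (A, v)) (e.symm.injective.comp (Prod.mk_right_injective A)) ?_⟩
  simp

lemma exists_hasExtensionProperty (V : Type*) [Infinite V] :
    ∃ g : V → V → Bool, (∀ x y, g x y = g y x) ∧ HasExtensionProperty g := by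
  classical
  obtain ⟨f, hf⟩ := exists_infinite_fibers V
  refine ⟨fun x y ↦ decide (x ∈ f y ∨ y ∈ f x), fun x y ↦ by simp only [or_comm],
    fun A B hAB ↦ ((hf A).sdiff (B.biUnion f).finite_toSet).mono ?_⟩
  rintro v ⟨rfl, hv⟩
  simp only [coe_biUnion, Set.mem_iUnion, mem_coe, not_exists] at hv
  refine ⟨fun a ha ↦ decide_eq_true (Or.inr ha), fun b hb ↦ decide_eq_false ?_⟩
  rintro (h | h)
  · exact hv b hb h
  · exact Finset.disjoint_left.1 hAB h hb

lemma card_interedges_union_self_le [DecidableEq V] {r : V → V → Prop}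
    [∀ x, DecidablePred (r x)] {A C : Finset V} (h : ∀ c ∈ C, ∀ a ∈ A, ¬r c a ∧ ¬r a c) :
    #(interedges r (A ∪ C) (A ∪ C)) ≤ #(interedges r A A) + #C ^ 2 := by
  have subset : interedges r (A ∪ C) (A ∪ C) ⊆ interedges r A A ∪ C ×ˢ C := by
    rintro ⟨x, y⟩ hxy
    simp only [mem_interedges_iff, mem_union, mem_product] at hxy ⊢
    grind
  calc _ ≤ _ := card_le_card subset
    _ ≤ #(interedges r A A) + #(C ×ˢ C) := card_union_le _ _
    _ = #(interedges r A A) + #C ^ 2 := by rw [card_product, sq]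

variable {D : Set (V → Bool)} {m : ℕ}

lemma HasExtensionProperty.exists_discrepancyLE_card_interedges_le (hg : HasExtensionProperty g)
    (hsymm : ∀ x y, g x y = g y x) {c : ℝ}
    (hsplit : ∀ S : Set V, S.Infinite → ∃ A B : Finset V, ↑A ⊆ S ∧ ↑B ⊆ S ∧
      Disjoint A B ∧ #A = m ∧ #B = m ∧ DiscrepancyLE D A B c) (k : ℕ) :
    ∃ A B : Finset V, Disjoint A B ∧ #A = k * m ∧ #B = k * m ∧ DiscrepancyLE D A B (k * c) ∧
      #(interedges (g · · = false) A A) ≤ k * m ^ 2 ∧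
      #(interedges (g · · = true) B B) ≤ k * m ^ 2 := by
  classical
  induction k with
  | zero => exact ⟨∅, ∅, by simp [DiscrepancyLE]⟩
  | succ k ih =>
    obtain ⟨A, B, hAB, hA, hB, hD, hgA, hgB⟩ := ih
    obtain ⟨A', B', hA'S, hB'S, hAB', hA', hB', hD'⟩ :=
      hsplit _ ((hg A B hAB).sdiff (A ∪ B).finite_toSet)
    have new_of_mem {v : V} (hv : v ∈ A' ∪ B') :
        ((∀ a ∈ A, g v a = true) ∧ ∀ b ∈ B, g v b = false) ∧ v ∉ A ∪ B :=
      (mem_union.1 hv).elim (hA'S ·) (hB'S ·)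
    have disjoint_new : Disjoint (A ∪ B) (A' ∪ B') :=
      Finset.disjoint_right.2 fun v hv ↦ (new_of_mem hv).2
    simp only [disjoint_union_left, disjoint_union_right] at disjoint_new
    obtain ⟨⟨hAA', hBA'⟩, hAB'', hBB'⟩ := disjoint_new
    refine ⟨A ∪ A', B ∪ B', ?_, ?_, ?_, ?_, ?_, ?_⟩
    · simp only [disjoint_union_left, disjoint_union_right]
      exact ⟨⟨hAB, hBA'.symm⟩, hAB'', hAB'⟩
    · rw [card_union_of_disjoint hAA', hA, hA', add_one_mul]
    · rw [card_union_of_disjoint hBB', hB, hB', add_one_mul]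
    · rw [Nat.cast_succ, add_one_mul]
      exact hD.union hD' hAA' hBB'
    · rw [add_one_mul]
      refine (card_interedges_union_self_le fun v hv a ha ↦ ?_).trans
        (Nat.add_le_add hgA (by rw [hA']))
      simp [hsymm a v, (new_of_mem (mem_union_left _ hv)).1.1 a ha]
    · rw [add_one_mul]
      refine (card_interedges_union_self_le fun v hv b hb ↦ ?_).trans
        (Nat.add_le_add hgB (by rw [hB']))
      simp [hsymm b v, (new_of_mem (mem_union_right _ hv)).1.2 b hb]

lemma one_sub_le_LP2_sub_LP2 {A B : Finset V} {k : ℕ} (hk : 0 < k) (hm : 0 < m)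
    (hA : #A = k * m) (hB : #B = k * m)
    (hgA : #(interedges (g · · = false) A A) ≤ k * m ^ 2)
    (hgB : #(interedges (g · · = true) B B) ≤ k * m ^ 2) :
    1 - 2 / (k : ℝ) ≤ LP2 (uniformMass A) g - LP2 (uniformMass B) g := by
  have div_le {N : ℕ} (hN : N ≤ k * m ^ 2) : (N : ℝ) / (k * m : ℕ) ^ 2 ≤ 1 / (k : ℝ) := by
    calc (N : ℝ) / (k * m : ℕ) ^ 2 ≤ (k * m ^ 2 : ℕ) / (k * m : ℕ) ^ 2 := by gcongr
      _ = 1 / (k : ℝ) := by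
        push_cast
        field_simp
  have hA0 : A.Nonempty := card_pos.1 (hA ▸ Nat.mul_pos hk hm)
  rw [LP2_uniformMass_eq_one_sub hA0, LP2_uniformMass, hA, hB]
  linarith [div_le hgA, div_le hgB, add_div (1 : ℝ) 1 k, one_add_one_eq_two (R := ℝ)]

theorem HasExtensionProperty.exists_IPM1_lt_lt_LP2_sub_LP2 (hg : HasExtensionProperty g)
    (hsymm : ∀ x y, g x y = g y x) (hD : vcDim D ≠ ⊤) {ε : ℝ} (hε : 0 < ε) {c : ℝ} (hc : c < 1) :
    ∃ p₁ p₂ : V → ℝ, IsDist p₁ ∧ IsDist p₂ ∧ IPM1 D p₁ p₂ < ε ∧ c < LP2 p₁ g - LP2 p₂ g := by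
  obtain ⟨m, hm, hsplit⟩ := exists_discrepancyLE_of_infinite hD (half_pos hε)
  obtain ⟨k, hkc⟩ := exists_nat_gt (2 / (1 - c))
  have hk : 0 < k := Nat.cast_pos.1 ((div_pos two_pos (sub_pos.2 hc)).trans hkc)
  obtain ⟨A, B, -, hA, hB, hAB, hgA, hgB⟩ :=
    hg.exists_discrepancyLE_card_interedges_le hsymm hsplit k
  have hkm : 0 < k * m := Nat.mul_pos hk hm
  refine ⟨uniformMass A, uniformMass B, isDist_uniformMass (card_pos.1 (hA ▸ hkm)),
    isDist_uniformMass (card_pos.1 (hB ▸ hkm)), ?_, ?_⟩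
  · calc IPM1 D (uniformMass A) (uniformMass B) ≤ k * (ε / 2 * m) / #A :=
          hAB.IPM1_uniformMass_le (by positivity) (hA.trans hB.symm)
      _ = ε / 2 := by
        rw [hA, Nat.cast_mul]
        field_simp
      _ < ε := half_lt_self hε
  · have : 2 / (k : ℝ) < 1 - c := (div_lt_comm₀ (sub_pos.2 hc) (by positivity)).1 hkc
    linarith [one_sub_le_LP2_sub_LP2 hk hm hA hB hgA hgB]

end ExtensionProperty

end

theorem stmt9_general (V : Type*) [Infinite V] :
    ∃ g : V → V → Bool, (∀ x y, g x y = g y x) ∧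
      ∀ D : Set (V → Bool), vcDim D ≠ ⊤ →
        ∀ ε : ℝ, 0 < ε → ∀ c : ℝ, c < 1 →
          ∃ p₁ p₂ : V → ℝ, IsDist p₁ ∧ IsDist p₂ ∧
            IPM1 D p₁ p₂ < ε ∧ |LP2 p₁ g - LP2 p₂ g| > c := by
  obtain ⟨g, hsymm, hg⟩ := exists_hasExtensionProperty V
  refine ⟨g, hsymm, fun D hD ε hε c hc ↦ ?_⟩
  obtain ⟨p₁, p₂, h₁, h₂, hIPM, hLP⟩ := hg.exists_IPM1_lt_lt_LP2_sub_LP2 hsymm hD hε hc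
  exact ⟨p₁, p₂, h₁, h₂, hIPM, hLP.trans_le (le_abs_self _)⟩

/-- a single graph beats every finite-VC distinguishing class
(Theorem `main_expressive1`). -/
theorem stmt9 :
    ∃ g : ℕ → ℕ → Bool, (∀ x y, g x y = g y x) ∧
      ∀ D : Set (ℕ → Bool), vcDim D ≠ ⊤ →
        ∀ ε : ℝ, 0 < ε →
          ∃ p₁ p₂ : ℕ → ℝ, IsDist p₁ ∧ IsDist p₂ ∧
            IPM1 D p₁ p₂ < ε ∧ |LP2 p₁ g - LP2 p₂ g| > 1 / 2 := by
  obtain ⟨g, hsymm, hg⟩ := stmt9_general ℕ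
  exact ⟨g, hsymm, fun D hD ε hε ↦ hg D hD ε hε (1 / 2) one_half_lt_one⟩

end GraphDisc
end
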